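/- Let T = (V, root, par) be a leafless, narrow rooted directed tree. Then the bounded Cesàro operator C_T on ℓ²(V) is subnormal if and only if T has no branching vertex, i.e. card(Chi(v)) = 1 for every v ∈ V (equivalently, T is isomorphic to the chain tree T₁ on ℕ in which each n has the unique child n+1). -/

import Mathlib

noncomputable section

open scoped ENNReal

/-- A rooted directed tree encoded by a vertex set `V`, a root, and a parent map. -/
structure TreeData (V : Type) where
  root : V
  par : V → V
  par_root : par root = root
  hroot : ∀ v : V, ∃ n : ℕ, par^[n] v = root

namespace TreeData

variable {V : Type}

open scoped Classical in
/-- The depth of a vertex: the least `n` with `par^[n] v = root`. -/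
def dep (T : TreeData V) (v : V) : ℕ := Nat.find (T.hroot v)

/-- The Cesàro map `Λ_T`. -/
def cesaro (T : TreeData V) (f : V → ℂ) : V → ℂ := fun v =>
  ((T.dep v : ℂ) + 1)⁻¹ * ∑ j ∈ Finset.range (T.dep v + 1), f (T.par^[j] v)

/-- The `n`-th level `Chi^⟨n⟩(root)`: vertices of depth `n`. -/
def level (T : TreeData V) (n : ℕ) : Set V := {v : V | T.dep v = n}

/-- The set of children of a vertex. -/
def chi (T : TreeData V) (u : V) : Set V := {v : V | v ≠ T.root ∧ T.par v = u}

end TreeData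

/-- The Hilbert space `ℓ²(V)` of square-summable complex functions on `V`. -/
abbrev L2 (V : Type) : Type := lp (fun _ : V => ℂ) 2

/-- A witness to subnormality of a bounded operator `S` on a complex Hilbert space `H`:
a Hilbert space `K`, an isometric embedding `J : H → K`, and a bounded normal operator `N` on
`K` extending `S`. -/
structure SubnormalWitness {H : Type} [NormedAddCommGroup H] [InnerProductSpace ℂ H]
    [CompleteSpace H] (S : H →L[ℂ] H) where
  K : Type
  [grp : NormedAddCommGroup K]
  [ips : InnerProductSpace ℂ K]
  [cpl : CompleteSpace K]
  J : H →ₗᵢ[ℂ] K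
  N : K →L[ℂ] K
  normal : ContinuousLinearMap.adjoint N * N = N * ContinuousLinearMap.adjoint N
  intertwine : ∀ h : H, N (J h) = J (S h)

/-- A bounded operator on a complex Hilbert space is subnormal if it has a normal extension to
a larger Hilbert space. -/
def IsSubnormal {H : Type} [NormedAddCommGroup H] [InnerProductSpace ℂ H] [CompleteSpace H]
    (S : H →L[ℂ] H) : Prop :=
  Nonempty (SubnormalWitness S)

/-!
A subnormal operator satisfies `‖C* f‖ ≤ ‖C f‖`. In a narrow tree some level has maximal size, and
if that size is at least two, the indicator of this level violates the inequality; hence every level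
is a singleton.

For the chain, `C` maps `(n + 1)(eₙ - eₙ₊₁)` to `eₙ`. Identifying `eₙ` with the Laguerre polynomial
`Lₙ` in `L²(Exp(1))` turns `C⁻¹` into `p ↦ x (p - p')`, because
`(n + 1)(Lₙ - Lₙ₊₁) = x (Lₙ - Lₙ')`. Now `Exp(1) = ∑ₖ 2⁻⁽ᵏ⁺¹⁾ Gamma(k + 1, 2)`, and integrating by
parts against `Gamma(k + 1, 2)` shows that `(k + 1) C - 1` is isometric for the seminorm of the
`k`-th term. Unitary dilations `Uₖ` of these isometries make `C` the restriction of the normal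
operator `⨁ₖ (k + 1)⁻¹ (1 + Uₖ)`.
-/

namespace TreeData

variable {V : Type} (T : TreeData V)

lemma iterate_par_dep (v : V) : T.par^[T.dep v] v = T.root := by
  classical exact Nat.find_spec (T.hroot v)

lemma dep_le_of_iterate_par_eq_root {v : V} {n : ℕ} (h : T.par^[n] v = T.root) : T.dep v ≤ n := by
  classical exact Nat.find_min' (T.hroot v) h

lemma dep_eq_zero_iff {v : V} : T.dep v = 0 ↔ v = T.root :=
  ⟨fun h => by simpa [h] using T.iterate_par_dep v,
    fun h => Nat.le_zero.1 (T.dep_le_of_iterate_par_eq_root h)⟩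

lemma dep_par (v : V) : T.dep (T.par v) = T.dep v - 1 := by
  apply le_antisymm
  · obtain hv | hv := Nat.eq_zero_or_pos (T.dep v)
    · have hroot := T.dep_eq_zero_iff.1 hv
      rw [hroot, T.par_root, ← hroot, hv]
    · apply T.dep_le_of_iterate_par_eq_root
      rw [← Function.iterate_succ_apply, Nat.succ_eq_add_one, Nat.sub_add_cancel hv,
        iterate_par_dep]
  · rw [Nat.sub_le_iff_le_add]
    exact T.dep_le_of_iterate_par_eq_root (T.iterate_par_dep (T.par v))

lemma dep_iterate_par (v : V) (j : ℕ) : T.dep (T.par^[j] v) = T.dep v - j := by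
  induction j with
  | zero => rfl
  | succ j ih => rw [Function.iterate_succ_apply', dep_par, ih, Nat.sub_sub]

lemma mem_chi_iff {u v : V} : v ∈ T.chi u ↔ T.par v = u ∧ T.dep v = T.dep u + 1 := by
  constructor
  · rintro ⟨hv, rfl⟩
    have : T.dep v ≠ 0 := mt T.dep_eq_zero_iff.1 hv
    exact ⟨rfl, by rw [dep_par]; omega⟩
  · rintro ⟨hpar, hdep⟩
    exact ⟨fun hv => by simp [T.dep_eq_zero_iff.2 hv] at hdep, hpar⟩

open scoped Classical in
/-- The vertices on the path from the root to `v`, both ends included. -/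
def ancestors (v : V) : Finset V := (Finset.range (T.dep v + 1)).image (T.par^[·] v)

lemma mem_ancestors {w v : V} :
    w ∈ T.ancestors v ↔ ∃ j ≤ T.dep v, T.par^[j] v = w := by
  simp [ancestors]

lemma root_mem_ancestors (v : V) : T.root ∈ T.ancestors v :=
  T.mem_ancestors.2 ⟨_, le_rfl, T.iterate_par_dep v⟩

lemma dep_le_of_mem_ancestors {w v : V} (h : w ∈ T.ancestors v) : T.dep w ≤ T.dep v := by
  obtain ⟨j, -, rfl⟩ := T.mem_ancestors.1 h
  simp [dep_iterate_par]

lemma injOn_iterate_par (v : V) :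
    Set.InjOn (T.par^[·] v) (Finset.range (T.dep v + 1) : Set ℕ) := by
  intro i hi j hj h
  have hdep := congrArg T.dep h
  simp only [Finset.coe_range, Set.mem_Iio, dep_iterate_par] at hi hj hdep
  omega

lemma card_ancestors (v : V) : (T.ancestors v).card = T.dep v + 1 := by
  classical
  rw [ancestors, Finset.card_image_of_injOn (T.injOn_iterate_par v), Finset.card_range]

lemma exists_mem_ancestors_dep_eq {v : V} {n : ℕ} (hn : n ≤ T.dep v) :
    ∃ w ∈ T.ancestors v, T.dep w = n :=
  ⟨_, T.mem_ancestors.2 ⟨T.dep v - n, Nat.sub_le _ _, rfl⟩, by rw [dep_iterate_par]; omega⟩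

lemma injOn_dep_ancestors (v : V) : Set.InjOn T.dep (T.ancestors v : Set V) := by
  intro w hw w' hw' h
  obtain ⟨i, hi, rfl⟩ := T.mem_ancestors.1 hw
  obtain ⟨j, hj, rfl⟩ := T.mem_ancestors.1 hw'
  rw [dep_iterate_par, dep_iterate_par] at h
  rw [show i = j by omega]

lemma cesaro_eq_sum_ancestors (f : V → ℂ) (v : V) :
    T.cesaro f v = ((T.dep v : ℂ) + 1)⁻¹ * ∑ w ∈ T.ancestors v, f w := by
  classical
  rw [cesaro, ancestors, Finset.sum_image (T.injOn_iterate_par v)]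

lemma exists_dep_eq_of_le {v : V} {n : ℕ} (hn : n ≤ T.dep v) : ∃ w, T.dep w = n :=
  (T.exists_mem_ancestors_dep_eq hn).imp fun _ h => h.2

lemma surjective_dep_of_injective [Infinite V] (hT : Function.Injective T.dep) :
    Function.Surjective T.dep := fun n => by
  obtain ⟨v, hv⟩ : ∃ v, n < T.dep v := by
    obtain ⟨_, ⟨v, rfl⟩, hv⟩ := (Set.infinite_range_of_injective hT).exists_gt n
    exact ⟨v, hv⟩
  exact T.exists_dep_eq_of_le hv.le

lemma injective_dep_of_encard_chi (h : ∀ v, (T.chi v).encard = 1) : Function.Injective T.dep := by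
  suffices ∀ n v w, T.dep v = n → T.dep w = n → v = w from fun v w hvw => this _ v w rfl hvw.symm
  intro n
  induction n with
  | zero => exact fun v w hv hw => (T.dep_eq_zero_iff.1 hv).trans (T.dep_eq_zero_iff.1 hw).symm
  | succ n ih =>
    intro v w hv hw
    have hpar : T.par v = T.par w := ih _ _ (by rw [dep_par, hv]; rfl) (by rw [dep_par, hw]; rfl)
    obtain ⟨c, hc⟩ := Set.encard_eq_one.1 (h (T.par v))
    have hvc : v ∈ T.chi (T.par v) := T.mem_chi_iff.2 ⟨rfl, by rw [dep_par, hv]; rfl⟩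
    have hwc : w ∈ T.chi (T.par v) :=
      T.mem_chi_iff.2 ⟨hpar.symm, by rw [hpar, dep_par, hw]; rfl⟩
    rw [hc, Set.mem_singleton_iff] at hvc hwc
    rw [hvc, hwc]

lemma injective_dep_iff_encard_chi [Infinite V] :
    Function.Injective T.dep ↔ ∀ v, (T.chi v).encard = 1 := by
  refine ⟨fun hT v => ?_, T.injective_dep_of_encard_chi⟩
  obtain ⟨c, hc⟩ := T.surjective_dep_of_injective hT (T.dep v + 1)
  refine Set.encard_eq_one.2 ⟨c, Set.eq_singleton_iff_unique_mem.2 ⟨?_, fun w hw => ?_⟩⟩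
  · exact T.mem_chi_iff.2 ⟨hT (by rw [dep_par, hc]; rfl), hc⟩
  · exact hT ((T.mem_chi_iff.1 hw).2.trans hc.symm)

end TreeData

section Indicator

variable {V : Type}

open scoped Classical in
/-- The indicator function of a finite set of vertices, as an element of `ℓ²(V)`. -/
def finsetIndicator (s : Finset V) : L2 V := ∑ v ∈ s, lp.single 2 v 1

open scoped Classical in
lemma finsetIndicator_apply (s : Finset V) (v : V) :
    finsetIndicator s v = if v ∈ s then 1 else 0 := by
  rw [finsetIndicator, lp.coeFn_sum]
  simp [lp.single_apply]

lemma finsetIndicator_eq_sum_singleton (s : Finset V) :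
    finsetIndicator s = ∑ v ∈ s, finsetIndicator {v} := by
  simp [finsetIndicator]

lemma inner_finsetIndicator_left (s : Finset V) (f : L2 V) :
    inner ℂ (finsetIndicator s) f = ∑ v ∈ s, f v := by
  classical
  simp [finsetIndicator, lp.inner_single_left]

lemma inner_finsetIndicator_finsetIndicator [DecidableEq V] (s t : Finset V) :
    inner ℂ (finsetIndicator s) (finsetIndicator t) = ((s ∩ t).card : ℂ) := by
  simp only [inner_finsetIndicator_left, finsetIndicator_apply, Finset.sum_ite_mem,
    Finset.sum_const, nsmul_eq_mul, mul_one]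
  congr!

end Indicator

section SeriesBounds

lemma sum_comp_le_of_encard_fiber_le {α β : Type*} (d : α → β) {M : ℕ}
    (hd : ∀ b, {a | d a = b}.encard ≤ M) {φ : β → ℝ} (hφ : ∀ b, 0 ≤ φ b) {B : ℝ}
    (hB : ∀ t : Finset β, ∑ b ∈ t, φ b ≤ B) (s : Finset α) :
    ∑ a ∈ s, φ (d a) ≤ M * B := by
  classical
  have hcard (b : β) : (s.filter (d · = b)).card ≤ M := by
    have : ((s.filter (d · = b) : Finset α) : Set α).encard ≤ M :=
      (Set.encard_le_encard fun a ha => (Finset.mem_filter.1 ha).2).trans (hd b)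
    rwa [Set.encard_coe_eq_coe_finsetCard, Nat.cast_le] at this
  calc ∑ a ∈ s, φ (d a) = ∑ b ∈ s.image d, (s.filter (d · = b)).card • φ b :=
        Finset.sum_comp φ d
    _ ≤ ∑ b ∈ s.image d, M * φ b := by
        gcongr with b
        rw [nsmul_eq_mul]
        gcongr
        exacts [hφ b, hcard b]
    _ ≤ M * B := by
        rw [← Finset.mul_sum]
        gcongr
        exact hB _

/-- Termwise, `(n + 1)⁻² ≤ (n + 1/2)⁻¹ - (n + 3/2)⁻¹`, which telescopes. -/
lemma sum_ite_le_inv_sq_le (N : ℕ) (t : Finset ℕ) :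
    ∑ n ∈ t, (if N ≤ n then ((n : ℝ) + 1)⁻¹ ^ 2 else 0) ≤ ((N : ℝ) + 1 / 2)⁻¹ := by
  set ψ : ℕ → ℝ := fun n => ((max n N : ℕ) + 1 / 2 : ℝ)⁻¹ with hψ
  have hterm (n : ℕ) : (if N ≤ n then ((n : ℝ) + 1)⁻¹ ^ 2 else 0) ≤ ψ n - ψ (n + 1) := by
    split_ifs with hn
    · have hdiff : ψ n - ψ (n + 1) = (((n : ℝ) + 1) ^ 2 - 1 / 4)⁻¹ := by
        simp only [hψ, max_eq_left hn, max_eq_left (Nat.le_succ_of_le hn)]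
        have : ((n : ℝ) + 1) ^ 2 - 1 / 4 = (n + 1 / 2) * (n + 3 / 2) := by ring
        rw [this]
        push_cast
        field_simp
        ring
      rw [hdiff, inv_pow]
      gcongr
      · nlinarith [(n.cast_nonneg : (0 : ℝ) ≤ n)]
      · linarith
    · exact sub_nonneg.2 (inv_anti₀ (by positivity) (by gcongr; omega))
  obtain ⟨k, hk⟩ := t.exists_nat_subset_range
  calc _ ≤ ∑ n ∈ Finset.range k, (if N ≤ n then ((n : ℝ) + 1)⁻¹ ^ 2 else 0) :=
        Finset.sum_le_sum_of_subset_of_nonneg hk fun _ _ _ => by positivity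
    _ ≤ ∑ n ∈ Finset.range k, (ψ n - ψ (n + 1)) := Finset.sum_le_sum fun n _ => hterm n
    _ = ψ 0 - ψ k := Finset.sum_range_sub' ψ k
    _ ≤ ((N : ℝ) + 1 / 2)⁻¹ := by
        simp only [hψ, Nat.zero_max, sub_le_self_iff]
        positivity

end SeriesBounds

section Hyponormality

open ContinuousLinearMap

lemma IsSubnormal.norm_adjoint_apply_le {H : Type} [NormedAddCommGroup H] [InnerProductSpace ℂ H]
    [CompleteSpace H] {S : H →L[ℂ] H} (hS : IsSubnormal S) (x : H) :
    ‖adjoint S x‖ ≤ ‖S x‖ := by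
  obtain ⟨⟨K, J, N, hN, hNJ⟩⟩ := hS
  have hnormal : ‖adjoint N (J x)‖ = ‖S x‖ := by
    rw [← isStarNormal_iff_norm_eq_adjoint.1 ⟨hN⟩, hNJ, J.norm_map]
  have hadjoint : adjoint S x = adjoint J.toContinuousLinearMap (adjoint N (J x)) :=
    ext_inner_right ℂ fun y => by
      simp [adjoint_inner_left, hNJ]
  rw [hadjoint, ← hnormal]
  exact (le_opNorm _ _).trans (mul_le_of_le_one_left (norm_nonneg _)
    ((adjoint.norm_map _).trans_le J.norm_toContinuousLinearMap_le))

end Hyponormality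

namespace TreeData

variable {V : Type} (T : TreeData V) {C : L2 V →L[ℂ] L2 V}
  (hC : ∀ (f : L2 V) (v : V), C f v = T.cesaro f v)

include hC

lemma adjoint_cesaro_finsetIndicator_singleton (u : V) :
    C.adjoint (finsetIndicator {u}) =
      ((T.dep u : ℂ) + 1)⁻¹ • finsetIndicator (T.ancestors u) := by
  refine ext_inner_right ℂ fun g => ?_
  rw [ContinuousLinearMap.adjoint_inner_left, inner_smul_left, inner_finsetIndicator_left,
    inner_finsetIndicator_left, Finset.sum_singleton, hC, cesaro_eq_sum_ancestors]
  simp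

lemma cesaro_finsetIndicator_level {N : ℕ} {s : Finset V} (hs : ∀ v, v ∈ s ↔ T.dep v = N)
    (v : V) : C (finsetIndicator s) v = if N ≤ T.dep v then ((T.dep v : ℂ) + 1)⁻¹ else 0 := by
  classical
  simp only [hC, cesaro_eq_sum_ancestors, finsetIndicator_apply, hs]
  split_ifs with hN
  · obtain ⟨w, hw, rfl⟩ := T.exists_mem_ancestors_dep_eq hN
    rw [Finset.sum_eq_single_of_mem w hw fun w' hw' hne =>
      if_neg (mt (T.injOn_dep_ancestors v hw' hw) hne), if_pos rfl, mul_one]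
  · rw [Finset.sum_eq_zero fun w hw => if_neg fun h : T.dep w = N =>
      hN (h ▸ T.dep_le_of_mem_ancestors hw), mul_zero]

lemma sq_norm_cesaro_finsetIndicator_level_le {N M : ℕ}
    (hM : ∀ n, (T.level n).encard ≤ M) {s : Finset V} (hs : ∀ v, v ∈ s ↔ T.dep v = N) :
    ‖C (finsetIndicator s)‖ ^ 2 ≤ M * ((N : ℝ) + 1 / 2)⁻¹ := by
  have hsum := lp.hasSum_norm (by norm_num) (C (finsetIndicator s))
  simp only [ENNReal.toReal_ofNat, Real.rpow_ofNat] at hsum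
  refine hasSum_le_of_sum_le hsum fun t => ?_
  refine le_of_eq_of_le (Finset.sum_congr rfl fun v _ => ?_)
    (sum_comp_le_of_encard_fiber_le T.dep hM (fun _ => by positivity) (sum_ite_le_inv_sq_le N) t)
  rw [T.cesaro_finsetIndicator_level hC hs]
  split_ifs
  · rw [norm_inv]
    norm_cast
  · simp

/-- Any two ancestor sets share the root, and each one has `N + 1` elements. -/
lemma le_sq_norm_adjoint_cesaro_finsetIndicator {N : ℕ} {s : Finset V}
    (hs : ∀ v ∈ s, T.dep v = N) :
    s.card * ((N : ℝ) + s.card) * ((N : ℝ) + 1)⁻¹ ^ 2 ≤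
      ‖C.adjoint (finsetIndicator s)‖ ^ 2 := by
  classical
  have hadjoint : C.adjoint (finsetIndicator s) =
      ((N : ℂ) + 1)⁻¹ • ∑ u ∈ s, finsetIndicator (T.ancestors u) := by
    rw [finsetIndicator_eq_sum_singleton, map_sum, Finset.smul_sum]
    exact Finset.sum_congr rfl fun u hu => by
      rw [T.adjoint_cesaro_finsetIndicator_singleton hC, hs u hu]
  have hnorm : ‖∑ u ∈ s, finsetIndicator (T.ancestors u)‖ ^ 2 =
      ∑ u ∈ s, ∑ v ∈ s, ((T.ancestors u ∩ T.ancestors v).card : ℝ) := by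
    rw [@norm_sq_eq_re_inner ℂ]
    simp only [sum_inner, inner_sum, inner_finsetIndicator_finsetIndicator]
    rw [Finset.sum_comm]
    norm_cast
  have hrow (u : V) (hu : u ∈ s) :
      (N : ℝ) + s.card ≤ ∑ v ∈ s, ((T.ancestors u ∩ T.ancestors v).card : ℝ) := by
    have hone (v : V) : 1 ≤ (T.ancestors u ∩ T.ancestors v).card :=
      Finset.card_pos.2 ⟨T.root, by simp [root_mem_ancestors]⟩
    have herase : (s.erase u).card ≤ ∑ v ∈ s.erase u, (T.ancestors u ∩ T.ancestors v).card := by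
      simpa using Finset.sum_le_sum fun v (_ : v ∈ s.erase u) => hone v
    have hcard := Finset.card_erase_add_one hu
    rw [← Finset.add_sum_erase _ _ hu, Finset.inter_self, card_ancestors, hs u hu]
    norm_cast
    omega
  rw [hadjoint, norm_smul, mul_pow, hnorm, mul_comm, norm_inv]
  have hN : ‖(N : ℂ) + 1‖ = N + 1 := by norm_cast
  rw [hN]
  gcongr
  simpa only [Finset.sum_const, nsmul_eq_mul] using Finset.sum_le_sum hrow

lemma card_le_one_of_forall_norm_adjoint_le (hhyp : ∀ f, ‖C.adjoint f‖ ≤ ‖C f‖) {N : ℕ}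
    {s : Finset V} (hs : ∀ v, v ∈ s ↔ T.dep v = N) (hmax : ∀ n, (T.level n).encard ≤ s.card) :
    s.card ≤ 1 := by
  by_contra! hcard
  have hle : s.card * ((N : ℝ) + s.card) * ((N : ℝ) + 1)⁻¹ ^ 2 ≤ s.card * ((N : ℝ) + 1 / 2)⁻¹ :=
    (T.le_sq_norm_adjoint_cesaro_finsetIndicator hC fun v hv => (hs v).1 hv).trans
      ((pow_le_pow_left₀ (norm_nonneg _) (hhyp _) 2).trans
        (T.sq_norm_cesaro_finsetIndicator_level_le hC hmax hs))
  have hcard' : (2 : ℝ) ≤ s.card := by exact_mod_cast hcard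
  have hpoly : ((N : ℝ) + s.card) * (N + 1 / 2) ≤ (N + 1) ^ 2 := by
    field_simp at hle
    linarith
  have hN : N = 0 := by
    have : (N : ℝ) ≤ 0 := by nlinarith [(N.cast_nonneg : (0 : ℝ) ≤ N)]
    exact Nat.le_zero.1 (by exact_mod_cast this)
  have hroot : s ⊆ {T.root} := fun v hv =>
    Finset.mem_singleton.2 (T.dep_eq_zero_iff.1 (((hs v).1 hv).trans hN))
  exact hcard.not_ge (Finset.card_le_card hroot)

lemma injective_dep_of_forall_norm_adjoint_le {m : ℕ} (hm : ∀ n, (T.level n).encard ≤ m)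
    (hhyp : ∀ f, ‖C.adjoint f‖ ≤ ‖C f‖) : Function.Injective T.dep := by
  have hfin (n : ℕ) : (T.level n).Finite := Set.finite_of_encard_le_coe (hm n)
  have hcard (n : ℕ) : (T.level n).encard = (hfin n).toFinset.card :=
    (hfin n).encard_eq_coe_toFinset_card
  have hbound : Set.range (fun n => (hfin n).toFinset.card) ⊆ Set.Iic m := by
    rintro _ ⟨n, rfl⟩
    exact_mod_cast (hcard n).symm.trans_le (hm n)
  obtain ⟨_, ⟨N, rfl⟩, hN⟩ :=
    Set.exists_max_image _ id ((Set.finite_Iic m).subset hbound) (Set.range_nonempty _)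
  have hmax (n : ℕ) : (T.level n).encard ≤ (hfin N).toFinset.card := by
    rw [hcard n]
    exact_mod_cast hN _ ⟨n, rfl⟩
  have hone := T.card_le_one_of_forall_norm_adjoint_le hC hhyp (N := N)
    (fun v => by simp [level]) hmax
  intro v w hvw
  exact Set.encard_le_one_iff.1 ((hmax (T.dep w)).trans (by exact_mod_cast hone)) v w hvw rfl

end TreeData

section PartialIsometry

open ContinuousLinearMap

variable {𝕜 H E : Type*} [RCLike 𝕜] [NormedAddCommGroup H] [InnerProductSpace 𝕜 H]
  [NormedAddCommGroup E] [InnerProductSpace 𝕜 E] [CompleteSpace E]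

/-- Partial isometries, encoded by the identity `U U* U = U`. -/
def IsPartialIsometry (U : E →L[𝕜] E) : Prop := U * adjoint U * U = U

lemma IsPartialIsometry.adjoint {U : E →L[𝕜] E} (hU : IsPartialIsometry U) :
    IsPartialIsometry (adjoint U) := by
  simpa [IsPartialIsometry, ← star_eq_adjoint, mul_assoc] using congrArg star hU

lemma adjoint_mul_self_linearIsometry_comp_orthogonalProjectionOnto {M : Submodule 𝕜 E}
    [CompleteSpace M] (W : M →ₗᵢ[𝕜] E) :
    adjoint (W.toContinuousLinearMap ∘L M.orthogonalProjectionOnto) *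
      (W.toContinuousLinearMap ∘L M.orthogonalProjectionOnto) = M.starProjection := by
  have hW : adjoint W.toContinuousLinearMap ∘L W.toContinuousLinearMap = 1 :=
    W.toContinuousLinearMap.norm_map_iff_adjoint_comp_self.1 W.norm_map
  rw [mul_def, adjoint_comp, Submodule.adjoint_orthogonalProjectionOnto, comp_assoc,
    ← comp_assoc (adjoint _), hW]
  rfl

lemma exists_linearIsometry_of_norm_eq (j j' : H →L[𝕜] E) (h : ∀ x, ‖j' x‖ = ‖j x‖) :
    ∃ W : j.range.topologicalClosure →ₗᵢ[𝕜] E,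
      ∀ x (hx : j x ∈ j.range.topologicalClosure), W ⟨j x, hx⟩ = j' x := by
  let e : H →L[𝕜] j.range.topologicalClosure :=
    j.codRestrict _ fun x => subset_closure ⟨x, rfl⟩
  have he : DenseRange e := by
    rintro ⟨y, hy⟩
    rw [closure_subtype, ← Set.range_comp]
    exact hy
  have hnorm : ∃ c : ℝ, ∀ x, ‖j' x‖ ≤ c * ‖e x‖ := ⟨1, fun x => by rw [one_mul]; exact (h x).le⟩
  have hW (x : H) : j'.toLinearMap.extendOfNorm e.toLinearMap (e x) = j' x :=
    LinearMap.extendOfNorm_eq he hnorm x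
  refine ⟨⟨j'.toLinearMap.extendOfNorm e.toLinearMap, fun y => ?_⟩, fun x _ => hW x⟩
  refine he.induction_on y (isClosed_eq (by fun_prop) (by fun_prop)) fun x => ?_
  exact (congrArg norm (hW x)).trans (h x)

lemma exists_isPartialIsometry_of_norm_eq (j j' : H →L[𝕜] E) (h : ∀ x, ‖j' x‖ = ‖j x‖) :
    ∃ U : E →L[𝕜] E, IsPartialIsometry U ∧ (∀ x, U (j x) = j' x) ∧
      ∀ x, adjoint U (U (j x)) = j x := by
  obtain ⟨W, hW⟩ := exists_linearIsometry_of_norm_eq j j' h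
  have hj (x : H) : j x ∈ j.range.topologicalClosure := subset_closure ⟨x, rfl⟩
  have hUU := adjoint_mul_self_linearIsometry_comp_orthogonalProjectionOnto W
  refine ⟨W.toContinuousLinearMap ∘L j.range.topologicalClosure.orthogonalProjectionOnto, ?_,
    fun x => ?_, fun x => ?_⟩
  · rw [IsPartialIsometry, mul_assoc, hUU]
    ext y
    exact congrArg W (Submodule.orthogonalProjectionOnto_mem_subspace_eq_self _)
  · rw [← hW x (hj x)]
    exact congrArg W (Submodule.orthogonalProjectionOnto_mem_subspace_eq_self ⟨j x, hj x⟩)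
  · exact (congr($hUU (j x))).trans (Submodule.starProjection_eq_self_iff.2 (hj x))

end PartialIsometry

section UnitaryDilation

open ContinuousLinearMap

variable {𝕜 H E : Type*} [RCLike 𝕜] [NormedAddCommGroup H] [InnerProductSpace 𝕜 H]
  [NormedAddCommGroup E] [InnerProductSpace 𝕜 E] [CompleteSpace E]

/-- The operator `(U, 1 - UU*; 1 - U*U, -U*)` on `E ⊕ E`. -/
def partialIsometryDilation (U : E →L[𝕜] E) : WithLp 2 (E × E) →L[𝕜] WithLp 2 (E × E) :=
  (WithLp.prodContinuousLinearEquiv 2 𝕜 E E).symm.toContinuousLinearMap ∘L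
    (U ∘L WithLp.fstL 2 𝕜 E E + (1 - U * adjoint U) ∘L WithLp.sndL 2 𝕜 E E).prod
      ((1 - adjoint U * U) ∘L WithLp.fstL 2 𝕜 E E - adjoint U ∘L WithLp.sndL 2 𝕜 E E)

lemma partialIsometryDilation_apply (U : E →L[𝕜] E) (x y : E) :
    partialIsometryDilation U (WithLp.toLp 2 (x, y)) =
      WithLp.toLp 2 (U x + (y - U (adjoint U y)), x - adjoint U (U x) - adjoint U y) :=
  rfl

lemma adjoint_partialIsometryDilation (U : E →L[𝕜] E) :
    adjoint (partialIsometryDilation U) = partialIsometryDilation (adjoint U) := by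
  refine ((ContinuousLinearMap.eq_adjoint_iff _ _).2 ?_).symm
  rintro ⟨x, y⟩ ⟨x', y'⟩
  have hself : inner 𝕜 (U (adjoint U x)) y' = inner 𝕜 x (U (adjoint U y')) := by
    rw [← adjoint_inner_left, adjoint_inner_right]
  simp only [partialIsometryDilation_apply, WithLp.prod_inner_apply, inner_add_left,
    inner_sub_left, inner_add_right, inner_sub_right, adjoint_inner_left, adjoint_inner_right,
    adjoint_adjoint, hself]
  ring

lemma IsPartialIsometry.dilation_adjoint_mul_dilation {U : E →L[𝕜] E} (hU : IsPartialIsometry U) :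
    partialIsometryDilation (ContinuousLinearMap.adjoint U) * partialIsometryDilation U = 1 := by
  have hUapply (x : E) : U (ContinuousLinearMap.adjoint U (U x)) = U x := congr($hU x)
  refine ContinuousLinearMap.ext ?_
  rintro ⟨x, y⟩
  simp only [mul_apply_eq_comp, partialIsometryDilation_apply, map_add, map_sub, hUapply,
    adjoint_adjoint, one_apply_eq_self]
  congr 2 <;> abel

lemma IsPartialIsometry.dilation_mem_unitary {U : E →L[𝕜] E} (hU : IsPartialIsometry U) :
    partialIsometryDilation U ∈ unitary (WithLp 2 (E × E) →L[𝕜] WithLp 2 (E × E)) := by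
  rw [Unitary.mem_iff, star_eq_adjoint, adjoint_partialIsometryDilation]
  refine ⟨hU.dilation_adjoint_mul_dilation, ?_⟩
  simpa using hU.adjoint.dilation_adjoint_mul_dilation

lemma exists_unitary_of_norm_eq (j j' : H →L[𝕜] E) (h : ∀ x, ‖j' x‖ = ‖j x‖) :
    ∃ U ∈ unitary (WithLp 2 (E × E) →L[𝕜] WithLp 2 (E × E)),
      ∀ x, U (WithLp.toLp 2 (j x, 0)) = WithLp.toLp 2 (j' x, 0) := by
  obtain ⟨U, hU, hj, hj'⟩ := exists_isPartialIsometry_of_norm_eq j j' h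
  refine ⟨_, hU.dilation_mem_unitary, fun x => ?_⟩
  simp [partialIsometryDilation_apply, hj' x, ← hj x]

end UnitaryDilation

section BlockDiagonal

open ContinuousLinearMap

variable {𝕜 ι : Type*} [RCLike 𝕜] {F : ι → Type*}

/-- The operator on an `ℓᵖ` direct sum that acts on each summand `F i` by the corresponding entry
of a bounded family. -/
def blockDiagonal [∀ i, NormedAddCommGroup (F i)] [∀ i, NormedSpace 𝕜 (F i)] {p : ℝ≥0∞}
    [Fact (1 ≤ p)] (A : lp (fun i => F i →L[𝕜] F i) ∞) : lp F p →L[𝕜] lp F p :=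
  have hA (x : lp F p) (i : ι) : ‖A i (x i)‖ ≤ ‖(((‖A‖ : ℝ) : 𝕜) • x) i‖ := by
    rw [lp.coeFn_smul, Pi.smul_apply, norm_smul, RCLike.norm_ofReal, abs_norm]
    exact (A i).le_of_opNorm_le (lp.norm_apply_le_norm ENNReal.top_ne_zero A i) _
  LinearMap.mkContinuous
    { toFun x := ⟨fun i => A i (x i), (lp.memℓp _).mono' (hA x)⟩
      map_add' x y := by ext i; exact map_add (A i) _ _
      map_smul' c x := by ext i; exact map_smul (A i) _ _ } ‖A‖ fun x =>
    (lp.norm_mono (zero_lt_one.trans_le Fact.out).ne' (hA x)).trans_eq (by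
      rw [norm_smul, RCLike.norm_ofReal, abs_norm])

variable [∀ i, NormedAddCommGroup (F i)] [∀ i, InnerProductSpace 𝕜 (F i)]
  [∀ i, CompleteSpace (F i)]

lemma adjoint_blockDiagonal (A : lp (fun i => F i →L[𝕜] F i) ∞) :
    adjoint (blockDiagonal A : lp F 2 →L[𝕜] lp F 2) = blockDiagonal (star A) := by
  refine ((ContinuousLinearMap.eq_adjoint_iff _ _).2 fun x y => ?_).symm
  rw [lp.inner_eq_tsum, lp.inner_eq_tsum]
  exact tsum_congr fun i => adjoint_inner_left (A i) (y i) (x i)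

lemma isStarNormal_blockDiagonal {A : lp (fun i => F i →L[𝕜] F i) ∞}
    (hA : ∀ i, IsStarNormal (A i)) :
    IsStarNormal (blockDiagonal A : lp F 2 →L[𝕜] lp F 2) := by
  refine ⟨?_⟩
  rw [star_eq_adjoint, adjoint_blockDiagonal]
  ext x i
  exact congr($((hA i).star_comm_self.eq) (x i))

end BlockDiagonal

section DirectSumCriterion

variable {H ι : Type} [NormedAddCommGroup H] [InnerProductSpace ℂ H] [CompleteSpace H]

lemma isSubnormal_of_normal_components {F : ι → Type} [∀ i, NormedAddCommGroup (F i)]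
    [∀ i, InnerProductSpace ℂ (F i)] [∀ i, CompleteSpace (F i)] {S : H →L[ℂ] H}
    (j : ∀ i, H →L[ℂ] F i) (hj : ∀ x, HasSum (fun i => ‖j i x‖ ^ 2) (‖x‖ ^ 2))
    (N : lp (fun i => F i →L[ℂ] F i) ∞) (hN : ∀ i, IsStarNormal (N i))
    (hNj : ∀ i x, N i (j i x) = j i (S x)) : IsSubnormal S := by
  have hmem (x : H) : Memℓp (fun i => j i x) 2 := memℓp_gen (by simpa using (hj x).summable)
  let J : H →ₗ[ℂ] lp F 2 :=
    { toFun x := ⟨fun i => j i x, hmem x⟩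
      map_add' x y := by ext i; exact map_add (j i) x y
      map_smul' c x := by ext i; exact map_smul (j i) c x }
  have hJ (x : H) : ‖J x‖ = ‖x‖ := by
    have hsum := lp.hasSum_norm (by norm_num) (J x)
    simp only [ENNReal.toReal_ofNat, Real.rpow_ofNat] at hsum
    exact (pow_left_inj₀ (norm_nonneg _) (norm_nonneg _) two_ne_zero).1 (hsum.unique (hj x))
  exact ⟨{
    K := lp F 2
    J := ⟨J, hJ⟩
    N := blockDiagonal N
    normal := (isStarNormal_blockDiagonal hN).star_comm_self.eq
    intertwine := fun x => by ext i; exact hNj i x }⟩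

/-- The normal extension acts on the `i`-th component as `r i • (1 + U)` with `U` a unitary
dilation of `T i`, so that its spectrum lies on a circle through `0`. -/
lemma isSubnormal_of_isometric_components {E : ι → Type} [∀ i, NormedAddCommGroup (E i)]
    [∀ i, InnerProductSpace ℂ (E i)] [∀ i, CompleteSpace (E i)] {S : H →L[ℂ] H}
    (j : ∀ i, H →L[ℂ] E i) (hj : ∀ x, HasSum (fun i => ‖j i x‖ ^ 2) (‖x‖ ^ 2))
    {r : ι → ℂ} {B : ℝ} (hr : ∀ i, ‖r i‖ ≤ B) (T : ι → H →L[ℂ] H)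
    (hS : ∀ i, S = r i • (1 + T i)) (hT : ∀ i x, ‖j i (T i x)‖ = ‖j i x‖) : IsSubnormal S := by
  choose U hU hUj using fun i => exists_unitary_of_norm_eq (j i) (j i ∘L T i) (hT i)
  have hUnorm (i : ι) : ‖U i‖ ≤ 1 :=
    (U i).opNorm_le_bound zero_le_one fun x => by
      rw [one_mul, ContinuousLinearMap.norm_map_of_mem_unitary (hU i)]
  have hbound (i : ι) : ‖r i • (1 + U i)‖ ≤ B * (1 + 1) := by
    rw [norm_smul]
    gcongr
    · exact (norm_nonneg _).trans (hr i)
    · exact hr i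
    · exact (norm_add_le _ _).trans (add_le_add ContinuousLinearMap.norm_id_le (hUnorm i))
  have hnormal (i : ι) : IsStarNormal (r i • (1 + U i)) := by
    have : IsStarNormal (U i) := isStarNormal_of_mem_unitary (hU i)
    exact .smul _ _
  let inl (i : ι) : E i →L[ℂ] WithLp 2 (E i × E i) :=
    (WithLp.prodContinuousLinearEquiv 2 ℂ (E i) (E i)).symm.toContinuousLinearMap ∘L
      ContinuousLinearMap.inl ℂ (E i) (E i)
  have hinl (i : ι) (x : H) : U i (inl i (j i x)) = inl i (j i (T i x)) := hUj i x
  have hnorm (i : ι) (y : E i) : ‖inl i y‖ = ‖y‖ := WithLp.norm_toLp_fst 2 _ _ y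
  refine isSubnormal_of_normal_components (fun i => inl i ∘L j i)
    (fun x => by simpa [hnorm] using hj x)
    ⟨fun i => r i • (1 + U i), memℓp_infty ⟨_, Set.forall_mem_range.2 hbound⟩⟩ hnormal
    fun i x => ?_
  conv_rhs => rw [hS i]
  simp [hinl]

end DirectSumCriterion

section GramMatrix

variable {𝕜 H E F : Type*} [RCLike 𝕜] [NormedAddCommGroup H] [NormedSpace 𝕜 H]
  [NormedAddCommGroup E] [InnerProductSpace 𝕜 E] [NormedAddCommGroup F] [InnerProductSpace 𝕜 F]

lemma norm_apply_eq_of_inner_eqOn {A : H →L[𝕜] E} {B : H →L[𝕜] F} {s : Set H}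
    (hs : Dense (Submodule.span 𝕜 s : Set H))
    (h : ∀ x ∈ s, ∀ y ∈ s, inner 𝕜 (A x) (A y) = inner 𝕜 (B x) (B y)) (x : H) :
    ‖A x‖ = ‖B x‖ := by
  have hright (x : H) (hx : x ∈ s) (y : H) : inner 𝕜 (A x) (A y) = inner 𝕜 (B x) (B y) :=
    congr($(ContinuousLinearMap.ext_on (f := innerSL 𝕜 (A x) ∘L A) (g := innerSL 𝕜 (B x) ∘L B) hs
      (h x hx)) y)
  have hleft (x y : H) : inner 𝕜 (A y) (A x) = inner 𝕜 (B y) (B x) :=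
    congr($(ContinuousLinearMap.ext_on (f := innerSL 𝕜 (A y) ∘L A) (g := innerSL 𝕜 (B y) ∘L B) hs
      fun x hx => by
        simpa using congrArg (starRingEnd 𝕜) (hright x hx y)) x)
  rw [norm_eq_sqrt_re_inner (𝕜 := 𝕜), norm_eq_sqrt_re_inner (𝕜 := 𝕜), hleft]

end GramMatrix

section Laguerre

open Polynomial

/-- The Laguerre polynomials. -/
def laguerre : ℕ → ℝ[X]
  | 0 => 1
  | n + 1 => laguerre n - C ((n : ℝ) + 1)⁻¹ * (X * (laguerre n - derivative (laguerre n)))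

lemma succ_smul_laguerre_sub (n : ℕ) :
    (n + 1) • (laguerre n - laguerre (n + 1)) =
      X * (laguerre n - derivative (laguerre n)) := by
  rw [laguerre, sub_sub_cancel, ← smul_eq_C_mul, ← Nat.cast_smul_eq_nsmul ℝ, Nat.cast_succ,
    smul_inv_smul₀ (by positivity)]

lemma derivative_laguerre_succ (n : ℕ) :
    derivative (laguerre (n + 1)) = derivative (laguerre n) - laguerre n := by
  induction n with
  | zero => simp [laguerre]
  | succ n ih =>
    have hrel := succ_smul_laguerre_sub n
    have hrel' := congrArg derivative hrel
    have hrel_succ' := congrArg derivative (succ_smul_laguerre_sub (n + 1))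
    have ih' := congrArg derivative ih
    have hcancel : C ((n : ℝ) + 2) ≠ 0 := C_ne_zero.2 (by positivity)
    refine mul_left_cancel₀ hcancel ?_
    simp only [nsmul_eq_mul, Nat.cast_succ, derivative_mul, derivative_X, map_sub, map_add,
      map_natCast, map_ofNat, derivative_natCast, derivative_one]
      at hrel hrel' hrel_succ' ih' ⊢
    linear_combination hrel' - hrel - hrel_succ' + ((n : ℝ[X]) + 2 - X) * ih + X * ih'

lemma X_mul_derivative_laguerre (n : ℕ) :
    X * derivative (laguerre n) = n • (laguerre n - laguerre (n - 1)) := by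
  cases n with
  | zero => simp [laguerre]
  | succ n =>
    rw [derivative_laguerre_succ, Nat.add_sub_cancel,
      ← neg_sub (laguerre n) (laguerre (n + 1)), smul_neg, succ_smul_laguerre_sub]
    ring

/-- The Stein identity of the Gamma distribution with shape `a` and rate `r`, for a functional on
polynomials. -/
def IsGammaFunctional (E : ℝ[X] →ₗ[ℝ] ℝ) (a r : ℝ) : Prop :=
  ∀ p, E (X * derivative p) = r * E (X * p) - a * E p

variable {E : ℝ[X] →ₗ[ℝ] ℝ}

lemma isGammaFunctional_of_pow {a r : ℝ} (hE : ∀ n : ℕ, r * E (X ^ (n + 1)) = (a + n) * E (X ^ n)) :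
    IsGammaFunctional E a r := by
  intro p
  induction p using Polynomial.induction_on' with
  | add p q hp hq =>
    simp only [map_add, mul_add, hp, hq]
    ring
  | monomial n c =>
    have hderivative : X * derivative (monomial n c) = (c * n) • X ^ n := by
      obtain _ | n := n
      · simp
      · rw [derivative_monomial, X_mul_monomial, smul_X_eq_monomial]
        rfl
    rw [hderivative, X_mul_monomial, ← smul_X_eq_monomial, ← smul_X_eq_monomial]
    simp only [map_smul, smul_eq_mul]
    linear_combination -c * hE n

lemma IsGammaFunctional.succ_mul_apply_laguerre_succ_mul_laguerre (hE : IsGammaFunctional E 1 1)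
    (n m : ℕ) :
    ((n : ℝ) + 1) * E (laguerre (n + 1) * laguerre m) =
      (n - m) * E (laguerre n * laguerre m) + m * E (laguerre n * laguerre (m - 1)) := by
  have hpoly : X * derivative (laguerre n * laguerre m) - X * (laguerre n * laguerre m) =
      m • (laguerre n * laguerre m - laguerre n * laguerre (m - 1)) -
        (n + 1) • (laguerre n * laguerre m - laguerre (n + 1) * laguerre m) := by
    rw [← mul_sub (laguerre n), ← sub_mul, ← mul_smul_comm, ← smul_mul_assoc,
      succ_smul_laguerre_sub, ← X_mul_derivative_laguerre, derivative_mul]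
    ring
  have happly := congrArg E hpoly
  simp only [map_sub, map_nsmul] at happly
  simp only [nsmul_eq_mul, Nat.cast_succ] at happly
  linear_combination hE (laguerre n * laguerre m) - happly

lemma IsGammaFunctional.apply_laguerre (hE : IsGammaFunctional E 1 1) (hE1 : E 1 = 1) (n : ℕ) :
    E (laguerre n) = if n = 0 then 1 else 0 := by
  induction n with
  | zero => exact hE1
  | succ n ih =>
    have hrec := hE.succ_mul_apply_laguerre_succ_mul_laguerre n 0
    simp only [laguerre, mul_one, ih] at hrec ⊢
    refine mul_left_cancel₀ (by positivity : (n : ℝ) + 1 ≠ 0) (hrec.trans ?_)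
    simp

lemma IsGammaFunctional.apply_laguerre_mul_laguerre (hE : IsGammaFunctional E 1 1)
    (hE1 : E 1 = 1) (n m : ℕ) :
    E (laguerre n * laguerre m) = if n = m then 1 else 0 := by
  induction n generalizing m with
  | zero => simp [laguerre, hE.apply_laguerre hE1, eq_comm]
  | succ n ih =>
    have hrec := hE.succ_mul_apply_laguerre_succ_mul_laguerre n m
    rw [ih, ih] at hrec
    refine mul_left_cancel₀ (by positivity : (n : ℝ) + 1 ≠ 0) (hrec.trans ?_)
    obtain _ | m := m
    · simp
    · by_cases h : n = m <;> by_cases h' : n = m + 1 <;> simp [h, h']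

/-- Relative to the form `E (p * q)`, the operator `D p = X * (p - p')` satisfies `D + D* = a`. -/
lemma IsGammaFunctional.apply_sub_mul_sub {a : ℝ} (hE : IsGammaFunctional E a 2) (p q : ℝ[X]) :
    E ((a • p - X * (p - derivative p)) * (a • q - X * (q - derivative q))) =
      E ((X * (p - derivative p)) * (X * (q - derivative q))) := by
  have hpoly : (a • p - X * (p - derivative p)) * (a • q - X * (q - derivative q)) =
      (X * (p - derivative p)) * (X * (q - derivative q)) +
        a • (a • (p * q) + X * derivative (p * q) - (2 : ℝ) • (X * (p * q))) := by
    simp only [smul_eq_C_mul, derivative_mul, map_ofNat]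
    ring
  rw [hpoly, map_add, map_smul, map_sub, map_add, map_smul, map_smul, hE]
  simp

end Laguerre

section GammaMeasure

open MeasureTheory ProbabilityTheory

variable {a r : ℝ}

lemma measurable_gammaPDF (a r : ℝ) : Measurable (gammaPDF a r) :=
  (measurable_gammaPDFReal a r).ennreal_ofReal

lemma mul_gammaPDFReal (ha : 0 < a) (hr : 0 < r) (x : ℝ) :
    x * gammaPDFReal a r x = a / r * gammaPDFReal (a + 1) r x := by
  unfold gammaPDFReal
  split_ifs with hx
  · have hpow : x ^ (a + 1 - 1) = x ^ (a - 1) * x := by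
      rw [← Real.rpow_add_one' hx (by simpa using ha.ne')]
      ring_nf
    have hΓ := (Real.Gamma_pos_of_pos ha).ne'
    rw [hpow, Real.Gamma_add_one ha.ne', Real.rpow_add_one hr.ne']
    field_simp
  · simp

lemma integrable_gammaMeasure_iff (ha : 0 < a) (hr : 0 < r) {f : ℝ → ℝ} :
    Integrable f (gammaMeasure a r) ↔ Integrable fun x => gammaPDFReal a r x * f x := by
  rw [gammaMeasure, integrable_withDensity_iff_integrable_smul'
    (measurable_gammaPDF a r) (by simp [gammaPDF])]
  simp [gammaPDF, ENNReal.toReal_ofReal (gammaPDFReal_nonneg ha hr _)]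

lemma integral_gammaMeasure (ha : 0 < a) (hr : 0 < r) (f : ℝ → ℝ) :
    ∫ x, f x ∂gammaMeasure a r = ∫ x, gammaPDFReal a r x * f x := by
  rw [gammaMeasure, integral_withDensity_eq_integral_toReal_smul
    (measurable_gammaPDF a r) (by simp [gammaPDF])]
  simp [gammaPDF, ENNReal.toReal_ofReal (gammaPDFReal_nonneg ha hr _)]

lemma integrable_pow_gammaMeasure (ha : 0 < a) (hr : 0 < r) (n : ℕ) :
    Integrable (fun x => x ^ n) (gammaMeasure a r) := by
  induction n generalizing a with
  | zero =>
    have := isProbabilityMeasure_gammaMeasure ha hr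
    simp
  | succ n ih =>
    have hint := (integrable_gammaMeasure_iff (by positivity) hr).1
      (ih (a := a + 1) (by positivity))
    rw [integrable_gammaMeasure_iff ha hr]
    refine (hint.const_mul (a / r)).congr (.of_forall fun x => ?_)
    linear_combination -(x ^ n) * mul_gammaPDFReal ha hr x

lemma integral_pow_succ_gammaMeasure_add_one (ha : 0 < a) (hr : 0 < r) (n : ℕ) :
    r * ∫ x, x ^ (n + 1) ∂gammaMeasure a r = a * ∫ x, x ^ n ∂gammaMeasure (a + 1) r := by
  rw [integral_gammaMeasure ha hr, integral_gammaMeasure (by positivity) hr,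
    ← integral_const_mul, ← integral_const_mul]
  refine integral_congr_ae (.of_forall fun x => ?_)
  have := mul_gammaPDFReal ha hr x
  field_simp at this
  linear_combination x ^ n * this

lemma integral_pow_succ_gammaMeasure (ha : 0 < a) (hr : 0 < r) (n : ℕ) :
    r * ∫ x, x ^ (n + 1) ∂gammaMeasure a r = (a + n) * ∫ x, x ^ n ∂gammaMeasure a r := by
  induction n generalizing a with
  | zero =>
    have := isProbabilityMeasure_gammaMeasure ha hr
    have := isProbabilityMeasure_gammaMeasure (a := a + 1) (by positivity) hr
    rw [integral_pow_succ_gammaMeasure_add_one ha hr]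
    simp
  | succ n ih =>
    have hstep := integral_pow_succ_gammaMeasure_add_one ha hr
    refine mul_left_cancel₀ hr.ne' ?_
    rw [hstep, mul_left_comm, ih (by positivity), mul_left_comm r, hstep]
    push_cast
    ring

lemma hasSum_mul_gammaPDFReal (x : ℝ) :
    HasSum (fun k : ℕ => (2 ^ (k + 1))⁻¹ * gammaPDFReal (k + 1) 2 x) (gammaPDFReal 1 1 x) := by
  by_cases hx : 0 ≤ x
  · have hterm (k : ℕ) : (2 ^ (k + 1))⁻¹ * gammaPDFReal (k + 1) 2 x =
        x ^ k / k.factorial * Real.exp (-(2 * x)) := by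
      rw [gammaPDFReal, if_pos hx, Real.Gamma_nat_eq_factorial, add_sub_cancel_right,
        Real.rpow_natCast, ← Nat.cast_add_one, Real.rpow_natCast]
      field_simp
    have htotal : gammaPDFReal 1 1 x = Real.exp x * Real.exp (-(2 * x)) := by
      rw [gammaPDFReal, if_pos hx, ← Real.exp_add]
      simp only [Real.one_rpow, Real.Gamma_one, sub_self, Real.rpow_zero]
      ring_nf
    simp_rw [hterm, htotal, Real.exp_eq_exp_ℝ]
    exact (NormedSpace.expSeries_div_hasSum_exp x).mul_right _
  · simp [gammaPDFReal, hx]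

/-- The `k`-th term of the mixture of Gamma distributions of rate `2`, with shapes `k + 1` and
weights `2 ^ (-(k + 1))`, that adds up to the exponential distribution of rate `1`. -/
def gammaMixture (k : ℕ) : Measure ℝ :=
  ENNReal.ofReal (2 ^ (k + 1))⁻¹ • gammaMeasure (k + 1) 2

lemma sum_gammaMixture : Measure.sum gammaMixture = expMeasure 1 := by
  unfold gammaMixture
  simp_rw [gammaMeasure, ← withDensity_smul _ (measurable_gammaPDF _ _)]
  rw [← withDensity_tsum fun k => (measurable_gammaPDF _ _).const_smul _, expMeasure, gammaMeasure]
  congr 1 with x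
  have hnonneg (k : ℕ) : 0 ≤ (2 ^ (k + 1))⁻¹ * gammaPDFReal (k + 1) 2 x :=
    mul_nonneg (by positivity) (gammaPDFReal_nonneg (by positivity) two_pos x)
  rw [tsum_apply (Pi.summable.2 fun _ => ENNReal.summable), gammaPDF,
    ← (hasSum_mul_gammaPDFReal x).tsum_eq,
    ENNReal.ofReal_tsum_of_nonneg hnonneg (hasSum_mul_gammaPDFReal x).summable]
  exact tsum_congr fun k => (ENNReal.ofReal_mul (by positivity)).symm

end GammaMeasure

section MomentFunctional

open Polynomial MeasureTheory ProbabilityTheory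

lemma integrable_polynomial_eval {μ : Measure ℝ} (hμ : ∀ n : ℕ, Integrable (fun x => x ^ n) μ)
    (p : ℝ[X]) : Integrable (fun x => p.eval x) μ := by
  simp_rw [eval_eq_sum_range]
  exact integrable_finsetSum _ fun n _ => (hμ n).const_mul _

/-- The functional `p ↦ ∫ p dμ` on polynomials, for a measure with finite moments. -/
def momentFunctional (μ : Measure ℝ) (hμ : ∀ n : ℕ, Integrable (fun x => x ^ n) μ) :
    ℝ[X] →ₗ[ℝ] ℝ where
  toFun p := ∫ x, p.eval x ∂μ
  map_add' p q := by
    simpa using integral_add (integrable_polynomial_eval hμ p) (integrable_polynomial_eval hμ q)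
  map_smul' c p := by simp [integral_const_mul]

lemma isGammaFunctional_momentFunctional_smul_gammaMeasure {a r : ℝ} (ha : 0 < a) (hr : 0 < r)
    (c : ℝ≥0∞) (hc : ∀ n : ℕ, Integrable (fun x => x ^ n) (c • gammaMeasure a r)) :
    IsGammaFunctional (momentFunctional (c • gammaMeasure a r) hc) a r := by
  refine isGammaFunctional_of_pow fun n => ?_
  have hmoment := integral_pow_succ_gammaMeasure ha hr n
  simp only [momentFunctional, LinearMap.coe_mk, AddHom.coe_mk, eval_pow, eval_X,
    integral_smul_measure, smul_eq_mul]
  linear_combination c.toReal * hmoment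

lemma memLp_two_eval {μ : Measure ℝ} (hμ : ∀ n : ℕ, Integrable (fun x => x ^ n) μ) (p : ℝ[X]) :
    MemLp (fun x => ((p.eval x : ℝ) : ℂ)) 2 μ := by
  have hsq : Integrable (fun x => p.eval x ^ 2) μ :=
    (integrable_polynomial_eval hμ (p ^ 2)).congr (.of_forall fun x => eval_pow 2)
  exact ((memLp_two_iff_integrable_sq p.continuous.aestronglyMeasurable).2 hsq).ofReal

/-- A polynomial, as an element of the complex `L²(μ)`. -/
def polynomialToLp (μ : Measure ℝ) (hμ : ∀ n : ℕ, Integrable (fun x => x ^ n) μ) :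
    ℝ[X] →ₗ[ℝ] Lp ℂ 2 μ where
  toFun p := (memLp_two_eval hμ p).toLp _
  map_add' p q := by
    rw [← MemLp.toLp_add]
    congr! 1
    ext x
    simp
  map_smul' c p := by
    rw [RingHom.id_apply, ← MemLp.toLp_const_smul]
    congr! 1
    ext x
    simp

lemma inner_polynomialToLp (μ : Measure ℝ) (hμ : ∀ n : ℕ, Integrable (fun x => x ^ n) μ)
    (p q : ℝ[X]) :
    inner ℂ (polynomialToLp μ hμ p) (polynomialToLp μ hμ q) = momentFunctional μ hμ (p * q) := by
  rw [L2.inner_def]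
  refine Eq.trans (integral_congr_ae ?_) (integral_ofReal (𝕜 := ℂ))
  filter_upwards [(memLp_two_eval hμ p).coeFn_toLp, (memLp_two_eval hμ q).coeFn_toLp] with x hp hq
  simp [polynomialToLp, hp, hq, mul_comm]

lemma hasSum_momentFunctional {ι : Type*} {ν : ι → Measure ℝ}
    (hν : ∀ n : ℕ, Integrable (fun x => x ^ n) (Measure.sum ν)) (p : ℝ[X]) :
    HasSum (fun i => momentFunctional (ν i) (fun n => (hν n).mono_measure (Measure.le_sum ν i)) p)
      (momentFunctional (Measure.sum ν) hν p) :=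
  hasSum_integral_measure (integrable_polynomial_eval hν p)

end MomentFunctional

section CesaroModel

open Polynomial MeasureTheory ProbabilityTheory

section DirectSum

variable {ι : Type*} {ν : ι → Measure ℝ}

/-- A polynomial, as an element of the Hilbert sum of the spaces `L²(ν i)`. -/
def polynomialToDirectSum (ν : ι → Measure ℝ)
    (hν : ∀ n : ℕ, Integrable (fun x => x ^ n) (Measure.sum ν)) :
    ℝ[X] →ₗ[ℝ] lp (fun i => Lp ℂ 2 (ν i)) 2 where
  toFun p := ⟨fun i => polynomialToLp (ν i) (fun n => (hν n).mono_measure (Measure.le_sum ν i)) p,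
    memℓp_gen <| by
      refine (hasSum_momentFunctional hν (p * p)).summable.congr fun i => ?_
      rw [ENNReal.toReal_ofNat, Real.rpow_ofNat, ← Complex.ofReal_inj, ← inner_polynomialToLp]
      exact_mod_cast inner_self_eq_norm_sq_to_K (𝕜 := ℂ) _⟩
  map_add' p q := by ext1; funext i; exact map_add (polynomialToLp (ν i) _) p q
  map_smul' c p := by ext1; funext i; exact map_smul (polynomialToLp (ν i) _) c p

lemma inner_polynomialToDirectSum (hν : ∀ n : ℕ, Integrable (fun x => x ^ n) (Measure.sum ν))
    (p q : ℝ[X]) : inner ℂ (polynomialToDirectSum ν hν p) (polynomialToDirectSum ν hν q) =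
      momentFunctional (Measure.sum ν) hν (p * q) := by
  refine (lp.hasSum_inner _ _).unique ?_
  convert! Complex.hasSum_ofReal.2 (hasSum_momentFunctional hν (p * q)) with i
  exact inner_polynomialToLp (ν i) _ p q

lemma orthonormal_polynomialToDirectSum_laguerre
    (hν : ∀ n : ℕ, Integrable (fun x => x ^ n) (Measure.sum ν))
    (hE : IsGammaFunctional (momentFunctional (Measure.sum ν) hν) 1 1)
    (hE1 : momentFunctional (Measure.sum ν) hν 1 = 1) :
    Orthonormal ℂ fun n => polynomialToDirectSum ν hν (laguerre n) := by
  refine orthonormal_iff_ite.2 fun n m => ?_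
  rw [inner_polynomialToDirectSum, hE.apply_laguerre_mul_laguerre hE1]
  split_ifs <;> simp

end DirectSum

section GammaMixture

lemma integrable_pow_sum_gammaMixture (n : ℕ) :
    Integrable (fun x => x ^ n) (Measure.sum gammaMixture) := by
  rw [sum_gammaMixture]
  exact integrable_pow_gammaMeasure one_pos one_pos n

lemma isGammaFunctional_sum_gammaMixture :
    IsGammaFunctional (momentFunctional _ integrable_pow_sum_gammaMixture) 1 1 := by
  have hmixture : Measure.sum gammaMixture = (1 : ℝ≥0∞) • gammaMeasure 1 1 := by
    rw [one_smul, sum_gammaMixture, expMeasure]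
  have hint := integrable_pow_sum_gammaMixture
  change IsGammaFunctional (momentFunctional _ hint) 1 1
  rw [hmixture] at hint
  simp only [hmixture]
  exact isGammaFunctional_momentFunctional_smul_gammaMeasure one_pos one_pos 1 hint

lemma momentFunctional_sum_gammaMixture_one :
    momentFunctional _ integrable_pow_sum_gammaMixture 1 = 1 := by
  have := isProbabilityMeasure_expMeasure (r := 1) one_pos
  simp [momentFunctional, sum_gammaMixture]

lemma integrable_pow_gammaMixture (k n : ℕ) : Integrable (fun x => x ^ n) (gammaMixture k) :=
  (integrable_pow_sum_gammaMixture n).mono_measure (Measure.le_sum _ k)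

lemma isGammaFunctional_gammaMixture (k : ℕ) :
    IsGammaFunctional (momentFunctional _ (integrable_pow_gammaMixture k)) (k + 1) 2 :=
  isGammaFunctional_momentFunctional_smul_gammaMeasure (by positivity) two_pos _
    (integrable_pow_gammaMixture k)

end GammaMixture

section HilbertBasis

variable {𝕜 H E ι : Type*} [RCLike 𝕜] [NormedAddCommGroup H] [InnerProductSpace 𝕜 H]
  [NormedAddCommGroup E] [InnerProductSpace 𝕜 E]

lemma exists_linearIsometry_hilbertBasis_eq [CompleteSpace E] (b : HilbertBasis ι 𝕜 H) {v : ι → E}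
    (hv : Orthonormal 𝕜 v) : ∃ J : H →ₗᵢ[𝕜] E, ∀ i, J (b i) = v i := by
  classical
  refine ⟨hv.orthogonalFamily.linearIsometry.comp b.repr.toLinearIsometry, fun i => ?_⟩
  simp [b.repr_self, OrthogonalFamily.linearIsometry_apply_single]

lemma dense_span_hilbertBasis_sub_succ [CompleteSpace H] (b : HilbertBasis ℕ 𝕜 H) :
    Dense (Submodule.span 𝕜 (Set.range fun n => (n + 1) • (b n - b (n + 1))) : Set H) := by
  rw [Submodule.dense_iff_topologicalClosure_eq_top, Submodule.topologicalClosure_eq_top_iff,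
    eq_bot_iff]
  intro x hx
  have hsucc (n : ℕ) : b.repr x n = b.repr x (n + 1) := by
    have horth : inner 𝕜 ((n + 1) • (b n - b (n + 1))) x = 0 :=
      hx _ (Submodule.subset_span ⟨n, rfl⟩)
    rw [← Nat.cast_smul_eq_nsmul 𝕜, inner_smul_left, inner_sub_left, ← b.repr_apply_apply,
      ← b.repr_apply_apply] at horth
    refine sub_eq_zero.1 ((mul_eq_zero.1 horth).resolve_left ?_)
    simpa using Nat.cast_add_one_ne_zero n
  have hconst (n : ℕ) : b.repr x n = b.repr x 0 := by
    induction n with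
    | zero => rfl
    | succ n ih => rw [← hsucc, ih]
  have hsummable := (lp.memℓp (b.repr x)).summable (by norm_num)
  simp_rw [hconst, summable_const_iff] at hsummable
  have hzero : b.repr x 0 = 0 := by simpa using hsummable
  refine b.repr.map_eq_zero_iff.1 ?_
  ext n
  rw [hconst, hzero]
  rfl

end HilbertBasis

lemma isSubnormal_of_map_hilbertBasis_sub_succ {H : Type} [NormedAddCommGroup H]
    [InnerProductSpace ℂ H] [CompleteSpace H] (b : HilbertBasis ℕ ℂ H) {S : H →L[ℂ] H}
    (hS : ∀ n, S ((n + 1) • (b n - b (n + 1))) = b n) : IsSubnormal S := by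
  obtain ⟨J, hJ⟩ := exists_linearIsometry_hilbertBasis_eq b
    (orthonormal_polynomialToDirectSum_laguerre integrable_pow_sum_gammaMixture
      isGammaFunctional_sum_gammaMixture momentFunctional_sum_gammaMixture_one)
  let j (k : ℕ) : H →L[ℂ] Lp ℂ 2 (gammaMixture k) := lp.evalCLM ℂ _ 2 k ∘L J.toContinuousLinearMap
  let P (k : ℕ) := polynomialToLp (gammaMixture k) (integrable_pow_gammaMixture k)
  have hj (k n : ℕ) : j k (b n) = P k (laguerre n) := congr($(hJ n) k)
  have hjx (k n : ℕ) : j k ((n + 1) • (b n - b (n + 1))) =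
      P k (X * (laguerre n - derivative (laguerre n))) := by
    rw [← succ_smul_laguerre_sub, map_nsmul, map_nsmul, map_sub, map_sub, hj, hj]
  let T (k : ℕ) : H →L[ℂ] H := (k + 1) • S - 1
  have hjTx (k n : ℕ) : j k (T k ((n + 1) • (b n - b (n + 1)))) =
      P k (((k : ℝ) + 1) • laguerre n - X * (laguerre n - derivative (laguerre n))) := by
    have hTx : T k ((n + 1) • (b n - b (n + 1))) =
        (k + 1) • b n - (n + 1) • (b n - b (n + 1)) :=
      congrArg (fun y => (k + 1) • y - _) (hS n)
    rw [hTx, map_sub, hjx, map_nsmul, hj, map_sub (P k), ← Nat.cast_add_one,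
      Nat.cast_smul_eq_nsmul, map_nsmul (P k)]
  refine isSubnormal_of_isometric_components j (fun x => ?_) (r := fun k => ((k : ℂ) + 1)⁻¹)
    (B := 1) (fun k => ?_) T (fun k => ?_) fun k => ?_
  · have hsum := lp.hasSum_norm (by norm_num) (J x)
    simp only [ENNReal.toReal_ofNat, Real.rpow_ofNat, J.norm_map] at hsum
    exact hsum
  · rw [norm_inv]
    refine inv_le_one_of_one_le₀ ?_
    exact_mod_cast Nat.le_add_left 1 k
  · rw [add_sub_cancel, ← Nat.cast_smul_eq_nsmul ℂ, smul_smul, Nat.cast_succ,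
      inv_mul_cancel₀ (Nat.cast_add_one_ne_zero k), one_smul]
  · refine norm_apply_eq_of_inner_eqOn (A := j k ∘L T k) (dense_span_hilbertBasis_sub_succ b) ?_
    rintro _ ⟨n, rfl⟩ _ ⟨m, rfl⟩
    simp only [ContinuousLinearMap.comp_apply, hjTx, hjx, P, inner_polynomialToLp]
    rw [(isGammaFunctional_gammaMixture k).apply_sub_mul_sub]

end CesaroModel

lemma exists_hilbertBasis_eq_finsetIndicator {V : Type} (e : ℕ ≃ V) :
    ∃ b : HilbertBasis ℕ ℂ (L2 V), ∀ n, b n = finsetIndicator {e n} := by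
  classical
  have horthonormal : Orthonormal ℂ fun n => finsetIndicator {e n} :=
    orthonormal_iff_ite.2 fun n m => by
      simp [inner_finsetIndicator_left, finsetIndicator_apply, eq_comm]
  refine ⟨.mkOfOrthogonalEqBot horthonormal (eq_bot_iff.2 fun f hf => ?_), fun n => by simp⟩
  ext v
  have hv := hf _ (Submodule.subset_span ⟨e.symm v, rfl⟩)
  simpa [inner_finsetIndicator_left] using hv

namespace TreeData

variable {V : Type} (T : TreeData V) {C : L2 V →L[ℂ] L2 V}
  (hC : ∀ (f : L2 V) (v : V), C f v = T.cesaro f v)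

include hC in
lemma cesaro_smul_finsetIndicator_sub {v w : V} (hT : Function.Injective T.dep)
    (hvw : T.dep w = T.dep v + 1) :
    C ((T.dep v + 1) • (finsetIndicator {v} - finsetIndicator {w})) = finsetIndicator {v} := by
  classical
  have hlevel (v u : V) : u ∈ ({v} : Finset V) ↔ T.dep u = T.dep v := by
    rw [Finset.mem_singleton, hT.eq_iff]
  ext u
  rw [← Nat.cast_smul_eq_nsmul ℂ, map_smul, map_sub, lp.coeFn_smul, lp.coeFn_sub, Pi.smul_apply,
    Pi.sub_apply, T.cesaro_finsetIndicator_level hC (hlevel v),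
    T.cesaro_finsetIndicator_level hC (hlevel w), finsetIndicator_apply, hvw]
  simp only [hlevel]
  obtain h | h | h := lt_trichotomy (T.dep u) (T.dep v)
  · simp [h.ne, h.not_ge, (h.trans (Nat.lt_succ_self _)).not_ge]
  · simp [h, Nat.cast_add_one_ne_zero]
  · simp [h.ne', h.le, Nat.succ_le_of_lt h]

include hC in
lemma isSubnormal_of_injective_dep [Infinite V] (hT : Function.Injective T.dep) :
    IsSubnormal C := by
  let e : ℕ ≃ V := (Equiv.ofBijective T.dep ⟨hT, T.surjective_dep_of_injective hT⟩).symm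
  have he (n : ℕ) : T.dep (e n) = n := (Equiv.ofBijective T.dep _).apply_symm_apply n
  obtain ⟨b, hb⟩ := exists_hilbertBasis_eq_finsetIndicator e
  refine isSubnormal_of_map_hilbertBasis_sub_succ b fun n => ?_
  simpa only [hb, he] using
    T.cesaro_smul_finsetIndicator_sub hC hT ((he (n + 1)).trans (congrArg (· + 1) (he n).symm))

end TreeData

theorem cesaro_subnormal_iff_chain_general {V : Type} [Infinite V] (T : TreeData V) (m : ℕ)
    (hm : ∀ n : ℕ, (T.level n).encard ≤ m) (C : L2 V →L[ℂ] L2 V)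
    (hC : ∀ (f : L2 V) (v : V), C f v = T.cesaro ⇑f v) :
    IsSubnormal C ↔ ∀ v : V, (T.chi v).encard = 1 := by
  rw [← T.injective_dep_iff_encard_chi]
  exact ⟨fun hS => T.injective_dep_of_forall_norm_adjoint_le hC hm hS.norm_adjoint_apply_le,
    T.isSubnormal_of_injective_dep hC⟩

/-- For a leafless, narrow rooted directed tree the bounded Cesàro operator
`C_T` is subnormal if and only if the tree has no branching vertex, i.e. every vertex has
exactly one child. -/
theorem cesaro_subnormal_iff_chain {V : Type} [Countable V] [Infinite V]
    (T : TreeData V)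
    (hleafless : ∀ u : V, (T.chi u).Nonempty)
    (m : ℕ) (hm : ∀ n : ℕ, (T.level n).encard ≤ m)
    (C : L2 V →L[ℂ] L2 V) (hC : ∀ (f : L2 V) (v : V), C f v = T.cesaro ⇑f v) :
    IsSubnormal C ↔ ∀ v : V, (T.chi v).encard = 1 := by
  exact cesaro_subnormal_iff_chain_general T m hm C hC
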